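/- arXiv:math/9503212 — 2 statements merged into one kernel-verified Lean document; each statement's English description precedes it below -/
import Mathlib

section
/- Let X_1,…,X_k be jointly symmetric q-stable random variables (0<q≤2) and m<k. Then E[∏_{i=1}^k (1-|X_i|)_+] ≥ E[∏_{i=1}^m (1-|X_i|)_+] · E[∏_{i=m+1}^k (1-|X_i|)_+], where (1-|t|)_+ = max(1-|t|, 0). -/
open MeasureTheory
open scoped RealInnerProductSpace

section PowerMean

lemma abs_add_rpow_add_abs_sub_rpow_le {q : ℝ} (hq0 : 0 < q) (hq2 : q ≤ 2) (x y : ℝ) :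
    |x + y| ^ q + |x - y| ^ q ≤ 2 * (|x| ^ q + |y| ^ q) := by
  have key : ∀ z : ℝ, |z| ^ q = (z ^ 2) ^ (q / 2) := fun z => by
    rw [← sq_abs, ← Real.rpow_natCast_mul (abs_nonneg z)]
    congr 1
    push_cast
    ring
  have hconc := (Real.concaveOn_rpow (p := q / 2) (by positivity) (by linarith)).2
    (Set.mem_Ici.2 (sq_nonneg (x + y))) (Set.mem_Ici.2 (sq_nonneg (x - y)))
    (by norm_num : (0 : ℝ) ≤ 1 / 2) (by norm_num : (0 : ℝ) ≤ 1 / 2) (by norm_num)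
  have hsub := Real.rpow_add_le_add_rpow (p := q / 2) (sq_nonneg x) (sq_nonneg y)
    (by positivity) (by linarith)
  simp only [smul_eq_mul] at hconc
  rw [show 1 / 2 * (x + y) ^ 2 + 1 / 2 * (x - y) ^ 2 = x ^ 2 + y ^ 2 by ring] at hconc
  simp only [key]
  linarith

lemma Lp_norm_rpow_eq_integral {α : Type*} [MeasurableSpace α] {μ : Measure α} {q : ℝ}
    (hq0 : 0 < q) (f : Lp ℝ (ENNReal.ofReal q) μ) :
    ‖f‖ ^ q = ∫ x, |f x| ^ q ∂μ := by
  have h0 : ENNReal.ofReal q ≠ 0 := by simpa using hq0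
  have hnonneg : 0 ≤ ∫ x, |f x| ^ q ∂μ := integral_nonneg fun x => by positivity
  rw [Lp.norm_def, (Lp.memLp f).eLpNorm_eq_integral_rpow_norm h0 ENNReal.ofReal_ne_top,
    ENNReal.toReal_ofReal hq0.le]
  simp only [Real.norm_eq_abs]
  rw [ENNReal.toReal_ofReal (by positivity), Real.rpow_inv_rpow hnonneg hq0.ne']

lemma Lp_integrable_abs_rpow {α : Type*} [MeasurableSpace α] {μ : Measure α} {q : ℝ}
    (hq0 : 0 < q) (f : Lp ℝ (ENNReal.ofReal q) μ) :
    Integrable (fun x => |f x| ^ q) μ := by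
  have h := (Lp.memLp f).integrable_norm_rpow (by simpa using hq0) ENNReal.ofReal_ne_top
  simpa [ENNReal.toReal_ofReal hq0.le] using h

lemma Lp_norm_add_rpow_add_norm_sub_rpow_le {α : Type*} [MeasurableSpace α] {μ : Measure α}
    {q : ℝ} (hq0 : 0 < q) (hq2 : q ≤ 2) (f g : Lp ℝ (ENNReal.ofReal q) μ) :
    ‖f + g‖ ^ q + ‖f - g‖ ^ q ≤ 2 * (‖f‖ ^ q + ‖g‖ ^ q) := by
  simp only [Lp_norm_rpow_eq_integral hq0]
  rw [← integral_add (Lp_integrable_abs_rpow hq0 _) (Lp_integrable_abs_rpow hq0 _),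
    ← integral_add (Lp_integrable_abs_rpow hq0 _) (Lp_integrable_abs_rpow hq0 _),
    ← integral_const_mul]
  refine integral_mono_ae
    ((Lp_integrable_abs_rpow hq0 _).add (Lp_integrable_abs_rpow hq0 _))
    (((Lp_integrable_abs_rpow hq0 _).add (Lp_integrable_abs_rpow hq0 _)).const_mul _) ?_
  filter_upwards [Lp.coeFn_add f g, Lp.coeFn_sub f g] with x hadd hsub
  simp only [hadd, hsub, Pi.add_apply, Pi.sub_apply]
  exact abs_add_rpow_add_abs_sub_rpow_le hq0 hq2 (f x) (g x)

end PowerMean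

section Fejer

lemma triangle_eq_zero {t : ℝ} (ht : 1 ≤ |t|) : max (1 - |t|) 0 = 0 :=
  max_eq_right (by linarith)

lemma integrable_triangle : Integrable fun t : ℝ => ((max (1 - |t|) 0 : ℝ) : ℂ) := by
  have hcont : Continuous fun t : ℝ => ((max (1 - |t|) 0 : ℝ) : ℂ) := by fun_prop
  refine hcont.integrable_of_hasCompactSupport ?_
  refine HasCompactSupport.intro (isCompact_Icc (a := (-1 : ℝ)) (b := 1)) fun t ht => ?_
  rw [triangle_eq_zero, Complex.ofReal_zero]
  by_contra! h
  exact ht (abs_le.1 h.le)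

/-- The Fejér kernel of the real line, normalized as the Fourier transform of `(1-|t|)₊`. -/
noncomputable def fejerKernel (w : ℝ) : ℝ :=
  2 * (1 - Real.cos (2 * Real.pi * w)) / (2 * Real.pi * w) ^ 2

lemma fejerKernel_nonneg (w : ℝ) : 0 ≤ fejerKernel w :=
  div_nonneg (by linarith [Real.cos_le_one (2 * Real.pi * w)]) (sq_nonneg _)

lemma measurable_fejerKernel : Measurable fejerKernel := by
  unfold fejerKernel
  fun_prop

lemma fejerKernel_le (w : ℝ) : fejerKernel w ≤ 2 * (1 + w ^ 2)⁻¹ := by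
  rcases eq_or_ne w 0 with rfl | hw
  · simp [fejerKernel]
  have hpi := Real.pi_gt_three
  have ha : 0 < (2 * Real.pi * w) ^ 2 := by positivity
  have h1 := Real.one_sub_sq_div_two_le_cos (x := 2 * Real.pi * w)
  have h2 := Real.neg_one_le_cos (2 * Real.pi * w)
  have h3 : 4 * w ^ 2 ≤ (2 * Real.pi * w) ^ 2 := by
    nlinarith [sq_nonneg w, mul_nonneg (sq_nonneg w) (by nlinarith : 0 ≤ Real.pi ^ 2 - 1)]
  rw [fejerKernel, ← div_eq_mul_inv, div_le_div_iff₀ ha (by positivity)]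
  nlinarith [mul_le_mul_of_nonneg_right (by linarith : 1 - Real.cos (2 * Real.pi * w) ≤ 2)
    (sq_nonneg w)]

lemma integrable_fejerKernel : Integrable fejerKernel := by
  refine (integrable_inv_one_add_sq.const_mul 2).mono'
    measurable_fejerKernel.aestronglyMeasurable (.of_forall fun w => ?_)
  rw [Real.norm_of_nonneg (fejerKernel_nonneg w)]
  exact fejerKernel_le w

lemma integral_exp_neg_mul_triangle {c : ℂ} (hc : c ≠ 0) :
    ∫ t : ℝ, Complex.exp (-c * t) * ((max (1 - |t|) 0 : ℝ) : ℂ) =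
      (Complex.exp c + Complex.exp (-c) - 2) / c ^ 2 := by
  have hcont : Continuous fun t : ℝ => Complex.exp (-c * t) * ((max (1 - |t|) 0 : ℝ) : ℂ) := by
    fun_prop
  have hexp : ∀ t : ℝ, HasDerivAt (fun t : ℝ => Complex.exp (-c * t))
      (Complex.exp (-c * t) * -c) t := fun t => by
    simpa using ((Complex.ofRealCLM.hasDerivAt (x := t)).const_mul (-c)).cexp
  have hid : ∀ t : ℝ, HasDerivAt (fun t : ℝ => (t : ℂ)) 1 t := fun t => by
    simpa using (hasDerivAt_id t).ofReal_comp
  have hrestrict : ∫ t : ℝ, Complex.exp (-c * t) * ((max (1 - |t|) 0 : ℝ) : ℂ) =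
      ∫ t in (-1 : ℝ)..1, Complex.exp (-c * t) * ((max (1 - |t|) 0 : ℝ) : ℂ) := by
    rw [intervalIntegral.integral_of_le (by norm_num),
      setIntegral_eq_integral_of_forall_compl_eq_zero]
    intro t ht
    rw [triangle_eq_zero, Complex.ofReal_zero, mul_zero]
    by_contra! h
    exact ht ⟨(abs_lt.1 h).1, (abs_lt.1 h).2.le⟩
  have hneg : ∫ t in (-1 : ℝ)..0, Complex.exp (-c * t) * ((max (1 - |t|) 0 : ℝ) : ℂ) =
      (-1 / c - 1 / c ^ 2) - (-Complex.exp c / c ^ 2) := by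
    rw [intervalIntegral.integral_congr (g := fun t : ℝ => Complex.exp (-c * t) * (1 + t)),
      intervalIntegral.integral_eq_sub_of_hasDerivAt
        (f := fun t : ℝ => -(1 + t) * Complex.exp (-c * t) / c - Complex.exp (-c * t) / c ^ 2)]
    · simp
      ring
    · intro t _
      refine ((((((hid t).const_add 1).neg).mul (hexp t)).div_const c).sub
        ((hexp t).div_const (c ^ 2))).congr_deriv ?_
      simp only [Pi.neg_apply]
      field_simp
      ring
    · exact Continuous.intervalIntegrable (by fun_prop) _ _
    · intro t ht
      rw [Set.uIcc_of_le (by norm_num)] at ht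
      simp only [abs_of_nonpos ht.2]
      rw [max_eq_left (by linarith [ht.1])]
      push_cast
      ring
  have hpos : ∫ t in (0 : ℝ)..1, Complex.exp (-c * t) * ((max (1 - |t|) 0 : ℝ) : ℂ) =
      Complex.exp (-c) / c ^ 2 - (-1 / c + 1 / c ^ 2) := by
    rw [intervalIntegral.integral_congr (g := fun t : ℝ => Complex.exp (-c * t) * (1 - t)),
      intervalIntegral.integral_eq_sub_of_hasDerivAt
        (f := fun t : ℝ => -(1 - t) * Complex.exp (-c * t) / c + Complex.exp (-c * t) / c ^ 2)]
    · simp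
    · intro t _
      refine ((((((hid t).const_sub 1).neg).mul (hexp t)).div_const c).add
        ((hexp t).div_const (c ^ 2))).congr_deriv ?_
      simp only [Pi.neg_apply]
      field_simp
      ring
    · exact Continuous.intervalIntegrable (by fun_prop) _ _
    · intro t ht
      rw [Set.uIcc_of_le (by norm_num)] at ht
      simp only [abs_of_nonneg ht.1]
      rw [max_eq_left (by linarith [ht.2])]
      push_cast
      ring
  rw [hrestrict, ← intervalIntegral.integral_add_adjacent_intervals
    (hcont.intervalIntegrable (-1) 0) (hcont.intervalIntegrable 0 1), hneg, hpos]
  ring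

open scoped FourierTransform in
lemma fourier_triangle {w : ℝ} (hw : w ≠ 0) :
    𝓕 (fun t : ℝ => ((max (1 - |t|) 0 : ℝ) : ℂ)) w = fejerKernel w := by
  have hpi : (Real.pi : ℂ) ≠ 0 := by exact_mod_cast Real.pi_ne_zero
  have hw' : (w : ℂ) ≠ 0 := by exact_mod_cast hw
  have hc : 2 * Real.pi * w * Complex.I ≠ 0 := by simp [hw]
  have h := integral_exp_neg_mul_triangle hc
  have hcos := Complex.two_cos (2 * Real.pi * w)
  rw [Real.fourier_real_eq_integral_exp_smul]
  simp only [smul_eq_mul]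
  convert h using 1
  · congr 1 with t
    push_cast
    ring_nf
  · rw [← neg_mul, ← hcos, mul_pow, Complex.I_sq, fejerKernel]
    push_cast
    field_simp
    ring

open scoped FourierTransform in
/-- The triangle function is a characteristic function. -/
lemma exists_charFun_eq_triangle :
    ∃ ρ : Measure ℝ, IsFiniteMeasure ρ ∧
      ∀ t : ℝ, charFun ρ t = ((max (1 - |t|) 0 : ℝ) : ℂ) := by
  have hae : 𝓕 (fun t : ℝ => ((max (1 - |t|) 0 : ℝ) : ℂ)) =ᵐ[volume]
      fun w => ((fejerKernel w : ℝ) : ℂ) := by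
    filter_upwards [Measure.ae_ne volume (0 : ℝ)] with w hw using fourier_triangle hw
  have hinv := Continuous.fourierInv_fourier_eq (by fun_prop) integrable_triangle
    (integrable_fejerKernel.ofReal.congr hae.symm)
  have hfin : IsFiniteMeasure (volume.withDensity fun w => ENNReal.ofReal (fejerKernel w)) :=
    isFiniteMeasure_withDensity_ofReal integrable_fejerKernel.2
  refine ⟨(volume.withDensity fun w => ENNReal.ofReal (fejerKernel w)).map (2 * Real.pi * ·),
    inferInstance, fun t => ?_⟩
  rw [charFun_map_mul, charFun_apply_real,
    integral_withDensity_eq_integral_toReal_smul measurable_fejerKernel.ennreal_ofReal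
      (.of_forall fun _ => ENNReal.ofReal_lt_top)]
  refine Eq.trans ?_ (congrFun hinv t)
  rw [Real.fourierInv_eq']
  refine integral_congr_ae ?_
  filter_upwards [hae] with w hw
  rw [hw, ENNReal.toReal_ofReal (fejerKernel_nonneg w)]
  simp only [smul_eq_mul, Complex.real_smul, RCLike.inner_apply, conj_trivial]
  push_cast
  ring_nf

end Fejer

section Correlation

variable {E : Type*} [NormedAddCommGroup E] [InnerProductSpace ℝ E] [MeasurableSpace E]
  [BorelSpace E] [SecondCountableTopology E]

lemma exists_charFun_eq_triangle_inner (v : E) :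
    ∃ ρ : Measure E, IsFiniteMeasure ρ ∧
      ∀ y : E, charFun ρ y = ((max (1 - |⟪y, v⟫|) 0 : ℝ) : ℂ) := by
  obtain ⟨ρ, hρ, h⟩ := exists_charFun_eq_triangle
  refine ⟨ρ.map (fun t => t • v), inferInstance, fun y => ?_⟩
  rw [← h, charFun_apply, integral_map (by fun_prop) (by fun_prop), charFun_apply_real]
  congr 1 with t
  rw [real_inner_smul_left, real_inner_comm]
  push_cast
  ring_nf

lemma exists_charFun_eq_prod_triangle_inner {ι : Type*} (S : Finset ι) (v : ι → E) :
    ∃ ρ : Measure E, IsFiniteMeasure ρ ∧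
      ∀ y : E, charFun ρ y = ((∏ i ∈ S, max (1 - |⟪y, v i⟫|) 0 : ℝ) : ℂ) := by
  classical
  induction S using Finset.induction_on with
  | empty => exact ⟨Measure.dirac 0, inferInstance, fun y => by simp⟩
  | insert a S ha ih =>
    obtain ⟨ρ, hρ, h⟩ := ih
    obtain ⟨τ, hτ, h'⟩ := exists_charFun_eq_triangle_inner (v a)
    refine ⟨τ.conv ρ, inferInstance, fun y => ?_⟩
    rw [charFun_conv, h, h', Finset.prod_insert ha]
    push_cast
    rfl

lemma integral_charFun_comm (μ ν : Measure E) [IsFiniteMeasure μ] [IsFiniteMeasure ν] :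
    ∫ y, charFun μ y ∂ν = ∫ x, charFun ν x ∂μ := by
  simp only [charFun_apply]
  rw [integral_integral_swap]
  · simp only [real_inner_comm]
  · refine Integrable.of_bound (C := 1) (by fun_prop) (.of_forall fun p => ?_)
    simp [Function.uncurry, Complex.norm_exp_ofReal_mul_I]

/-- If `f` and `g` are real characteristic functions, and the characteristic function `r` of `P`
satisfies `2 * r a * r b ≤ r (a + b) + r (a - b)`, then `f` and `g` are positively correlated
under `P`. -/
lemma integral_mul_integral_le_of_charFun (P μ ν : Measure E) [IsFiniteMeasure P]
    [IsFiniteMeasure μ] [IsFiniteMeasure ν] (f g r : E → ℝ)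
    (hf : ∀ y, charFun μ y = (f y : ℂ)) (hg : ∀ y, charFun ν y = (g y : ℂ))
    (hr : ∀ a, charFun P a = (r a : ℂ))
    (hle : ∀ a b, 2 * (r a * r b) ≤ r (a + b) + r (a - b)) :
    (∫ y, f y ∂P) * (∫ y, g y ∂P) ≤ ∫ y, f y * g y ∂P := by
  have swap : ∀ (τ : Measure E) [IsFiniteMeasure τ] (h : E → ℝ),
      (∀ y, charFun τ y = (h y : ℂ)) → ∫ y, h y ∂P = ∫ a, r a ∂τ := by
    intro τ _ h hh
    have := integral_charFun_comm τ P
    simp only [hh, hr] at this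
    rw [integral_complex_ofReal, integral_complex_ofReal] at this
    exact_mod_cast this
  have hmeas : Measurable r := by
    have : r = fun a => (charFun P a).re := by
      ext a
      simp [hr]
    rw [this]
    exact Complex.measurable_re.comp measurable_charFun
  have hbound : ∀ a, ‖r a‖ ≤ P.real Set.univ := fun a => by
    simpa [hr] using norm_charFun_le (μ := P) a
  have hneg : ∀ y, charFun (ν.map (fun x => -x)) y = (g y : ℂ) := fun y => by
    rw [charFun_apply, integral_map (by fun_prop) (by fun_prop)]
    simp only [inner_neg_left]
    have := charFun_neg (μ := ν) y
    rw [hg y, Complex.conj_ofReal, charFun_apply] at this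
    simpa [inner_neg_right] using this
  have hint : ∀ (φ : E × E → E), Measurable φ →
      Integrable (fun p => r (φ p)) (μ.prod ν) := fun φ hφ =>
    Integrable.of_bound (hmeas.comp hφ).aestronglyMeasurable _ (.of_forall fun p => hbound _)
  have hadd : ∫ y, f y * g y ∂P = ∫ p, r (p.1 + p.2) ∂(μ.prod ν) := by
    rw [swap (μ.conv ν) (fun y => f y * g y) (fun y => by simp [charFun_conv, hf, hg]),
      Measure.conv, integral_map (by fun_prop) hmeas.aestronglyMeasurable]
  have hsub : ∫ y, f y * g y ∂P = ∫ p, r (p.1 - p.2) ∂(μ.prod ν) := by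
    rw [swap (μ.conv (ν.map (fun x => -x))) (fun y => f y * g y)
      (fun y => by rw [charFun_conv, hf, hneg]; push_cast; rfl),
      Measure.conv, integral_map (by fun_prop) hmeas.aestronglyMeasurable]
    have : μ.prod (ν.map (fun x => -x)) = (μ.prod ν).map (Prod.map id (fun x => -x)) := by
      rw [← Measure.map_prod_map _ _ measurable_id measurable_neg, Measure.map_id]
    rw [this, integral_map (f := fun p : E × E => r (p.1 + p.2)) (by fun_prop)
      (hmeas.comp (by fun_prop)).aestronglyMeasurable]
    simp [sub_eq_add_neg]
  have hmono : ∫ p, 2 * (r p.1 * r p.2) ∂(μ.prod ν) ≤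
      ∫ p, (r (p.1 + p.2) + r (p.1 - p.2)) ∂(μ.prod ν) := by
    refine integral_mono ?_ ((hint _ (by fun_prop)).add (hint _ (by fun_prop)))
      fun p => hle p.1 p.2
    have h1 : ∀ (τ : Measure E) [IsFiniteMeasure τ], Integrable r τ := fun τ _ =>
      Integrable.of_bound hmeas.aestronglyMeasurable _ (.of_forall hbound)
    exact ((h1 μ).mul_prod (h1 ν)).const_mul 2
  rw [integral_const_mul, integral_prod_mul,
    integral_add (hint _ (by fun_prop)) (hint _ (by fun_prop)), ← hadd, ← hsub] at hmono
  rw [swap μ f hf, swap ν g hg]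
  linarith

end Correlation

lemma two_mul_exp_neg_mul_exp_neg_le {a b c d : ℝ} (h : c + d ≤ 2 * (a + b)) :
    2 * (Real.exp (-a) * Real.exp (-b)) ≤ Real.exp (-c) + Real.exp (-d) := by
  have h1 := Real.add_one_le_exp (a + b - c)
  have h2 := Real.add_one_le_exp (a + b - d)
  have hc : Real.exp (-c) = Real.exp (a + b - c) * (Real.exp (-a) * Real.exp (-b)) := by
    rw [← Real.exp_add, ← Real.exp_add]
    ring_nf
  have hd : Real.exp (-d) = Real.exp (a + b - d) * (Real.exp (-a) * Real.exp (-b)) := by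
    rw [← Real.exp_add, ← Real.exp_add]
    ring_nf
  rw [hc, hd, ← add_mul]
  exact mul_le_mul_of_nonneg_right (by linarith) (by positivity)

/-- Example (i): correlation inequality for the functions `(1-|t|)₊` of jointly
symmetric `q`-stable random variables. -/
theorem stable_correlation_triangle
    (q : ℝ) (hq0 : 0 < q) (hq2 : q ≤ 2)
    (n k m : ℕ) (hm : m < k)
    (Ω : Type*) [MeasureSpace Ω] [IsProbabilityMeasure (volume : Measure Ω)]
    (Y : Ω → EuclideanSpace ℝ (Fin n)) (hY : Measurable Y)
    (s : Fin n → Lp ℝ (ENNReal.ofReal q) (volume.restrict (Set.Icc (0:ℝ) 1)))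
    (hchar : ∀ θ : EuclideanSpace ℝ (Fin n),
      ∫ ω, Complex.exp ((⟪θ, Y ω⟫ : ℝ) * Complex.I) =
        Complex.exp (-(‖∑ i, θ i • s i‖ ^ q : ℝ)))
    (ξ : Fin k → EuclideanSpace ℝ (Fin n))
    (X : Fin k → Ω → ℝ) (hX : ∀ i ω, X i ω = ⟪Y ω, ξ i⟫) :
    ∫ ω, ∏ i : Fin k, max (1 - |X i ω|) 0 ≥
      (∫ ω, ∏ i ∈ Finset.univ.filter (fun i : Fin k => (i : ℕ) < m),
          max (1 - |X i ω|) 0) *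
      (∫ ω, ∏ i ∈ Finset.univ.filter (fun i : Fin k => m ≤ (i : ℕ)),
          max (1 - |X i ω|) 0) := by
  simp only [hX]
  obtain ⟨μ, hμ, hf⟩ := exists_charFun_eq_prod_triangle_inner
    (Finset.univ.filter (fun i : Fin k => (i : ℕ) < m)) ξ
  obtain ⟨ν, hν, hg⟩ := exists_charFun_eq_prod_triangle_inner
    (Finset.univ.filter (fun i : Fin k => m ≤ (i : ℕ))) ξ
  have hr : ∀ a, charFun (Measure.map Y volume) a =
      ((Real.exp (-‖∑ i, a i • s i‖ ^ q) : ℝ) : ℂ) := fun a => by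
    rw [charFun_apply, integral_map hY.aemeasurable (by fun_prop)]
    simp only [real_inner_comm a]
    rw [hchar]
    push_cast
    rfl
  have hP : IsProbabilityMeasure (Measure.map Y volume) :=
    Measure.isProbabilityMeasure_map hY.aemeasurable
  have main := integral_mul_integral_le_of_charFun _ μ ν _ _ _ hf hg hr fun a b => by
    refine two_mul_exp_neg_mul_exp_neg_le ?_
    have h := Lp_norm_add_rpow_add_norm_sub_rpow_le hq0 hq2 (∑ i, a i • s i) (∑ i, b i • s i)
    simpa only [PiLp.add_apply, PiLp.sub_apply, add_smul, sub_smul, Finset.sum_add_distrib,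
      Finset.sum_sub_distrib] using h
  rw [integral_map hY.aemeasurable (by fun_prop), integral_map hY.aemeasurable (by fun_prop),
    integral_map hY.aemeasurable (by fun_prop)] at main
  refine main.trans_eq ?_
  congr 1 with ω
  simp only [← not_lt]
  exact Finset.prod_filter_mul_prod_filter_not _ _ _
end

section
/- (Prékopa–Leindler marginal theorem) If f: ℝ^k → [0,∞) is log-concave and 0 < m < k, then g(x) = ∫_{ℝ^{k-m}} f(x, z) dz is log-concave on ℝ^m. -/
open MeasureTheory

open Set Pointwise in
/-- The one-dimensional Brunn–Minkowski inequality for compact sets. -/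
theorem volume_add_le_of_isCompact {K L C : Set ℝ} (hK : IsCompact K) (hK' : K.Nonempty)
    (hL : IsCompact L) (hL' : L.Nonempty) {t s : ℝ} (ht : 0 ≤ t) (hs : 0 ≤ s)
    (h : ∀ x ∈ K, ∀ y ∈ L, t * x + s * y ∈ C) :
    ENNReal.ofReal t * volume K + ENNReal.ofReal s * volume L ≤ volume C := by
  obtain ⟨a, haK, ha⟩ := hK.exists_isGreatest hK'
  obtain ⟨b, hbL, hb⟩ := hL.exists_isLeast hL'
  have vol (r c : ℝ) (hr : 0 ≤ r) (S : Set ℝ) :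
      volume ((fun x => c + r * x) '' S) = ENNReal.ofReal r * volume S := by
    have : (fun x => c + r * x) '' S = (c + ·) '' (r • S) := by
      rw [← image_smul, image_image]; rfl
    rw [this, image_add_left, measure_preimage_add, Measure.addHaar_smul]
    simp [abs_of_nonneg hr]
  rw [← vol t (s * b) ht, ← vol s (t * a) hs, ← measure_union₀]
  · refine measure_mono (union_subset ?_ ?_)
    · rintro _ ⟨x, hx, rfl⟩
      simpa only [add_comm] using h x hx b hbL
    · rintro _ ⟨y, hy, rfl⟩
      exact h a haK y hy
  · exact (hL.image (by fun_prop)).measurableSet.nullMeasurableSet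
  · refine measure_mono_null (t := {t * a + s * b}) ?_ (by simp)
    rintro _ ⟨⟨x, hx, rfl⟩, ⟨y, hy, hxy⟩⟩
    have h1 := mul_le_mul_of_nonneg_left (ha hx) ht
    have h2 := mul_le_mul_of_nonneg_left (hb hy) hs
    simp only [mem_singleton_iff] at *
    linarith

theorem MeasurableSet.volume_eq_iSup_isCompact_nonempty {A : Set ℝ} (hA : MeasurableSet A)
    (hA' : A.Nonempty) :
    volume A = ⨆ K : {K : Set ℝ // K ⊆ A ∧ IsCompact K ∧ K.Nonempty}, volume (K : Set ℝ) := by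
  obtain ⟨a, ha⟩ := hA'
  refine le_antisymm ?_ (iSup_le fun K => measure_mono K.2.1)
  rw [hA.measure_eq_iSup_isCompact]
  refine iSup_le fun K => iSup_le fun hKA => iSup_le fun hK => ?_
  refine le_iSup_of_le ⟨insert a K, Set.insert_subset ha hKA, hK.insert a,
    Set.insert_nonempty a K⟩ ?_
  exact measure_mono (Set.subset_insert a K)

/-- The one-dimensional Brunn–Minkowski inequality. -/
theorem volume_add_le_of_forall_mem {A B C : Set ℝ} (hA : MeasurableSet A) (hA' : A.Nonempty)
    (hB : MeasurableSet B) (hB' : B.Nonempty) {t s : ℝ} (ht : 0 ≤ t) (hs : 0 ≤ s)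
    (h : ∀ x ∈ A, ∀ y ∈ B, t * x + s * y ∈ C) :
    ENNReal.ofReal t * volume A + ENNReal.ofReal s * volume B ≤ volume C := by
  rw [hA.volume_eq_iSup_isCompact_nonempty hA', hB.volume_eq_iSup_isCompact_nonempty hB',
    ENNReal.mul_iSup, ENNReal.mul_iSup]
  have nonempty_subtype {S : Set ℝ} (hS : S.Nonempty) :
      Nonempty {K : Set ℝ // K ⊆ S ∧ IsCompact K ∧ K.Nonempty} := by
    obtain ⟨x, hx⟩ := hS
    exact ⟨{x}, by simpa using hx, isCompact_singleton, Set.singleton_nonempty x⟩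
  have := nonempty_subtype hA'
  have := nonempty_subtype hB'
  exact ENNReal.iSup_add_iSup_le fun K L =>
    volume_add_le_of_isCompact K.2.2.1 K.2.2.2 L.2.2.1 L.2.2.2 ht hs
      fun x hx y hy => h x (K.2.1 hx) y (L.2.1 hy)

theorem lintegral_ofReal_add_le_of_min_le {f g h : ℝ → ℝ} (hf : Measurable f) (hg : Measurable g)
    (hh : Measurable h) (hf0 : ∀ x, 0 ≤ f x) (hg0 : ∀ x, 0 ≤ g x) (hh0 : ∀ x, 0 ≤ h x)
    (hsup : ∀ r, 0 < r → ((∃ x, r < f x) ↔ ∃ x, r < g x))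
    {t s : ℝ} (ht : 0 ≤ t) (hs : 0 ≤ s)
    (hmin : ∀ x y, min (f x) (g y) ≤ h (t * x + s * y)) :
    ENNReal.ofReal t * (∫⁻ x, ENNReal.ofReal (f x)) +
        ENNReal.ofReal s * (∫⁻ x, ENNReal.ofReal (g x)) ≤
      ∫⁻ x, ENNReal.ofReal (h x) := by
  have meas (u : ℝ → ℝ) : Measurable fun r : ℝ => volume {x | r < u x} :=
    Antitone.measurable fun a b hab => measure_mono fun x hx => lt_of_le_of_lt hab hx
  rw [lintegral_eq_lintegral_meas_lt _ (.of_forall hf0) hf.aemeasurable,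
    lintegral_eq_lintegral_meas_lt _ (.of_forall hg0) hg.aemeasurable,
    lintegral_eq_lintegral_meas_lt _ (.of_forall hh0) hh.aemeasurable,
    ← lintegral_const_mul _ (meas f), ← lintegral_const_mul _ (meas g),
    ← lintegral_add_left ((meas f).const_mul _)]
  refine setLIntegral_mono' measurableSet_Ioi fun r hr => ?_
  by_cases hr' : ∃ x, r < f x
  · refine volume_add_le_of_forall_mem (measurableSet_lt measurable_const hf) hr'
      (measurableSet_lt measurable_const hg) ((hsup r hr).1 hr') ht hs fun x hx y hy => ?_
    exact (lt_min hx hy).trans_le (hmin x y)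
  · have hg' : ¬∃ x, r < g x := mt (hsup r hr).2 hr'
    push Not at hr' hg'
    simp [Set.eq_empty_of_forall_notMem (s := {x | r < f x}) fun x => (hr' x).not_gt,
      Set.eq_empty_of_forall_notMem (s := {x | r < g x}) fun x => (hg' x).not_gt]

theorem ENNReal.rpow_mul_rpow_le_add {t s : ℝ} (ht : 0 < t) (hs : 0 < s) (hts : t + s = 1)
    (a b : ENNReal) : a ^ t * b ^ s ≤ ENNReal.ofReal t * a + ENNReal.ofReal s * b := by
  by_cases ha : a = ⊤
  · simp [ha, ENNReal.mul_top, ht]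
  by_cases hb : b = ⊤
  · simp [hb, ENNReal.mul_top, hs]
  lift a to NNReal using ha
  lift b to NNReal using hb
  lift t to NNReal using ht.le
  lift s to NNReal using hs.le
  rw [← ENNReal.coe_rpow_of_nonneg _ t.coe_nonneg, ← ENNReal.coe_rpow_of_nonneg _ s.coe_nonneg]
  simp only [ENNReal.ofReal_coe_nnreal]
  exact_mod_cast NNReal.geom_mean_le_arith_mean2_weighted t s a b (by exact_mod_cast hts)

/-- The one-dimensional Prékopa–Leindler inequality for bounded functions. -/
theorem Real.prekopa_leindler_of_bddAbove {f g h : ℝ → ℝ} (hf : Measurable f) (hg : Measurable g)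
    (hh : Measurable h) (hf0 : ∀ x, 0 ≤ f x) (hg0 : ∀ x, 0 ≤ g x) (hh0 : ∀ x, 0 ≤ h x)
    (hfb : BddAbove (Set.range f)) (hgb : BddAbove (Set.range g))
    {t s : ℝ} (ht : 0 < t) (hs : 0 < s) (hts : t + s = 1)
    (hfgh : ∀ x y, f x ^ t * g y ^ s ≤ h (t * x + s * y)) :
    (∫⁻ x, ENNReal.ofReal (f x)) ^ t * (∫⁻ x, ENNReal.ofReal (g x)) ^ s ≤
      ∫⁻ x, ENNReal.ofReal (h x) := by
  have eq_zero {u : ℝ → ℝ} (hu0 : ∀ x, 0 ≤ u x) (hub : BddAbove (Set.range u))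
      (hu : ¬0 < ⨆ x, u x) : ∫⁻ x, ENNReal.ofReal (u x) = 0 := by
    have (x : ℝ) : u x = 0 := le_antisymm ((le_ciSup hub x).trans (not_lt.1 hu)) (hu0 x)
    simp [this]
  by_cases hA : 0 < ⨆ x, f x
  swap; · simp [eq_zero hf0 hfb hA, ht]
  by_cases hB : 0 < ⨆ x, g x
  swap; · simp [eq_zero hg0 hgb hB, hs]
  set A := ⨆ x, f x
  set B := ⨆ x, g x
  have hC : 0 < A ^ t * B ^ s := by positivity
  have scale {c : ℝ} (hc : 0 < c) (u : ℝ → ℝ) (hu : Measurable u) :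
      ∫⁻ x, ENNReal.ofReal (u x) = ENNReal.ofReal c * ∫⁻ x, ENNReal.ofReal (u x / c) := by
    rw [← lintegral_const_mul _ (by fun_prop)]
    refine lintegral_congr fun x => ?_
    rw [← ENNReal.ofReal_mul hc.le, mul_div_cancel₀ _ hc.ne']
  have exists_lt {u : ℝ → ℝ} (hub : BddAbove (Set.range u)) (hu : 0 < ⨆ x, u x) (r : ℝ) :
      (∃ x, r < u x / ⨆ x, u x) ↔ r < 1 := by
    simp_rw [lt_div_iff₀ hu]
    constructor
    · rintro ⟨x, hx⟩
      exact lt_of_mul_lt_mul_right (by simpa using hx.trans_le (le_ciSup hub x)) hu.le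
    · intro hr
      exact exists_lt_of_lt_ciSup (by simpa using mul_lt_mul_of_pos_right hr hu)
  have key := lintegral_ofReal_add_le_of_min_le (f := fun x => f x / A) (g := fun x => g x / B)
    (h := fun x => h x / (A ^ t * B ^ s)) (by fun_prop) (by fun_prop) (by fun_prop)
    (fun x => div_nonneg (hf0 x) hA.le) (fun x => div_nonneg (hg0 x) hB.le)
    (fun x => div_nonneg (hh0 x) hC.le)
    (fun r _ => (exists_lt hfb hA r).trans (exists_lt hgb hB r).symm) ht.le hs.le
    fun x y => by
      have hfx := div_nonneg (hf0 x) hA.le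
      have hgy := div_nonneg (hg0 y) hB.le
      have hm := le_min hfx hgy
      calc min (f x / A) (g y / B)
          = min (f x / A) (g y / B) ^ t * min (f x / A) (g y / B) ^ s := by
            rw [← Real.rpow_add_of_nonneg hm ht.le hs.le, hts, Real.rpow_one]
        _ ≤ (f x / A) ^ t * (g y / B) ^ s := by
            gcongr
            · exact min_le_left _ _
            · exact min_le_right _ _
        _ = f x ^ t * g y ^ s / (A ^ t * B ^ s) := by
            rw [Real.div_rpow (hf0 x) hA.le, Real.div_rpow (hg0 y) hB.le, div_mul_div_comm]
        _ ≤ h (t * x + s * y) / (A ^ t * B ^ s) := by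
            gcongr
            exact hfgh x y
  rw [scale hA f hf, scale hB g hg, scale hC h hh, ENNReal.mul_rpow_of_nonneg _ _ ht.le,
    ENNReal.mul_rpow_of_nonneg _ _ hs.le, mul_mul_mul_comm, ENNReal.ofReal_mul (by positivity),
    ENNReal.ofReal_rpow_of_nonneg hA.le ht.le, ENNReal.ofReal_rpow_of_nonneg hB.le hs.le]
  gcongr
  exact (ENNReal.rpow_mul_rpow_le_add ht hs hts _ _).trans key

theorem ENNReal.iSup_rpow {ι : Sort*} (a : ι → ENNReal) {t : ℝ} (ht : 0 < t) :
    (⨆ i, a i) ^ t = ⨆ i, a i ^ t :=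
  (ENNReal.orderIsoRpow t ht).map_iSup a

/-- The one-dimensional Prékopa–Leindler inequality. -/
theorem ENNReal.prekopa_leindler_real {f g h : ℝ → ENNReal} (hf : Measurable f)
    (hg : Measurable g) (hh : Measurable h) {t s : ℝ} (ht : 0 < t) (hs : 0 < s) (hts : t + s = 1)
    (hfgh : ∀ x y, f x ^ t * g y ^ s ≤ h (t * x + s * y)) :
    (∫⁻ x, f x) ^ t * (∫⁻ x, g x) ^ s ≤ ∫⁻ x, h x := by
  have ne_top (a : ENNReal) (n : ℕ) : min a n ≠ ⊤ :=
    ne_top_of_le_ne_top (ENNReal.natCast_ne_top n) (min_le_right _ _)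
  have ofReal_toReal (u : ℝ → ENNReal) (n : ℕ) :
      ∫⁻ x, ENNReal.ofReal (min (u x) n).toReal = ∫⁻ x, min (u x) n :=
    lintegral_congr fun x => ENNReal.ofReal_toReal (ne_top _ n)
  have truncated (n : ℕ) :
      (∫⁻ x, min (f x) n) ^ t * (∫⁻ x, min (g x) n) ^ s ≤ ∫⁻ x, h x := by
    have bdd (u : ℝ → ENNReal) : BddAbove (Set.range fun x => (min (u x) n).toReal) := by
      refine ⟨n, ?_⟩
      rintro _ ⟨x, rfl⟩
      simpa using ENNReal.toReal_mono (ENNReal.natCast_ne_top n) (min_le_right (u x) n)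
    have key := Real.prekopa_leindler_of_bddAbove
      (f := fun x => (min (f x) n).toReal) (g := fun x => (min (g x) n).toReal)
      (h := fun x => (min (h x) n).toReal) (by fun_prop) (by fun_prop) (by fun_prop)
      (fun _ => ENNReal.toReal_nonneg) (fun _ => ENNReal.toReal_nonneg)
      (fun _ => ENNReal.toReal_nonneg) (bdd f) (bdd g) ht hs hts
      fun x y => by
        rw [ENNReal.toReal_rpow, ENNReal.toReal_rpow, ← ENNReal.toReal_mul]
        refine ENNReal.toReal_mono (ne_top _ n) (le_min ?_ ?_)
        · refine le_trans ?_ (hfgh x y)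
          gcongr <;> exact min_le_left _ _
        · calc min (f x) n ^ t * min (g y) n ^ s ≤ (n : ENNReal) ^ t * (n : ENNReal) ^ s := by
                gcongr <;> exact min_le_right _ _
            _ = n := by rw [← ENNReal.rpow_add_of_nonneg _ _ ht.le hs.le, hts, ENNReal.rpow_one]
    rw [ofReal_toReal, ofReal_toReal, ofReal_toReal] at key
    exact key.trans (lintegral_mono fun x => min_le_left _ _)
  have mono (u : ℝ → ENNReal) : Monotone fun (n : ℕ) x => min (u x) (n : ENNReal) :=
    fun m n hmn x => min_le_min_left _ (by exact_mod_cast hmn)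
  have lim {u : ℝ → ENNReal} (hu : Measurable u) : ∫⁻ x, u x = ⨆ n : ℕ, ∫⁻ x, min (u x) n := by
    rw [← lintegral_iSup (fun n => by fun_prop) (mono u)]
    refine lintegral_congr fun x => ?_
    exact ((inf_iSup_eq (u x) _).symm.trans (by simp [ENNReal.iSup_natCast])).symm
  rw [lim hf, lim hg, ENNReal.iSup_rpow _ ht, ENNReal.iSup_rpow _ hs, ENNReal.iSup_mul]
  refine iSup_le fun m => ?_
  rw [ENNReal.mul_iSup]
  refine iSup_le fun n => le_trans ?_ (truncated (max m n))
  gcongr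
  · exact le_max_left m n
  · exact le_max_right m n

/-- The **Prékopa–Leindler inequality**. -/
theorem ENNReal.prekopa_leindler {n : ℕ} {f g h : (Fin n → ℝ) → ENNReal} (hf : Measurable f)
    (hg : Measurable g) (hh : Measurable h) {t s : ℝ} (ht : 0 < t) (hs : 0 < s) (hts : t + s = 1)
    (hfgh : ∀ x y, f x ^ t * g y ^ s ≤ h (t • x + s • y)) :
    (∫⁻ x, f x) ^ t * (∫⁻ x, g x) ^ s ≤ ∫⁻ x, h x := by
  induction n with
  | zero =>
    have vol : volume (Set.univ : Set (Fin 0 → ℝ)) = 1 := by simp [volume_pi]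
    simp only [lintegral_unique, vol, mul_one]
    exact (hfgh _ _).trans_eq (congrArg h (Subsingleton.elim _ _))
  | succ n ih =>
    let e := (MeasurableEquiv.piFinSuccAbove (fun _ : Fin (n + 1) => ℝ) 0).symm
    have he : MeasurePreserving e := (volume_preserving_piFinSuccAbove _ 0).symm
    have e_comb (a b : ℝ) (x y : Fin n → ℝ) :
        e (t * a + s * b, t • x + s • y) = t • e (a, x) + s • e (b, y) := by
      ext i
      refine Fin.cases ?_ (fun j => ?_) i <;> simp [e, MeasurableEquiv.piFinSuccAbove]
    have fubini {u : (Fin (n + 1) → ℝ) → ENNReal} (hu : Measurable u) :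
        ∫⁻ x, u x = ∫⁻ a, ∫⁻ x, u (e (a, x)) := by
      rw [← he.lintegral_comp hu]
      exact lintegral_prod _ (hu.comp e.measurable).aemeasurable
    have meas {u : (Fin (n + 1) → ℝ) → ENNReal} (hu : Measurable u) :
        Measurable fun a => ∫⁻ x, u (e (a, x)) :=
      (hu.comp e.measurable).lintegral_prod_right'
    have slice {u : (Fin (n + 1) → ℝ) → ENNReal} (hu : Measurable u) (a : ℝ) :
        Measurable fun x => u (e (a, x)) :=
      hu.comp (e.measurable.comp measurable_prodMk_left)
    rw [fubini hf, fubini hg, fubini hh]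
    refine ENNReal.prekopa_leindler_real (meas hf) (meas hg) (meas hh) ht hs hts fun a b => ?_
    refine ih (slice hf a) (slice hg b) (slice hh _) fun x y => ?_
    rw [e_comb]
    exact hfgh _ _

/-- Prékopa–Leindler marginal theorem: the marginal of a log-concave function
is log-concave. -/
theorem prekopa_leindler_marginal (k m : ℕ) (hm0 : 0 < m) (hmk : m < k)
    (f : ((Fin m → ℝ) × (Fin (k - m) → ℝ)) → ℝ)
    (hmeas : Measurable f) (hnonneg : ∀ p, 0 ≤ f p)
    (hlc : ∀ (p q : (Fin m → ℝ) × (Fin (k - m) → ℝ)) (t : ℝ), t ∈ Set.Icc (0:ℝ) 1 →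
      f p ^ t * f q ^ (1 - t) ≤ f (t • p + (1 - t) • q))
    (hint : ∀ x : Fin m → ℝ, Integrable (fun z => f (x, z))) :
    ∀ (x y : Fin m → ℝ) (t : ℝ), t ∈ Set.Icc (0:ℝ) 1 →
      (∫ z, f (x, z)) ^ t * (∫ z, f (y, z)) ^ (1 - t) ≤
        ∫ z, f (t • x + (1 - t) • y, z) := by
  intro x y t ht
  obtain rfl | ht0 := ht.1.eq_or_lt
  · simp
  obtain rfl | ht1 := ht.2.eq_or_lt
  · simp
  have hs : 0 < 1 - t := sub_pos.2 ht1
  have integral_nonneg (w : Fin m → ℝ) : 0 ≤ ∫ z, f (w, z) :=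
    MeasureTheory.integral_nonneg fun z => hnonneg (w, z)
  have ofReal_integral (w : Fin m → ℝ) :
      ENNReal.ofReal (∫ z, f (w, z)) = ∫⁻ z, ENNReal.ofReal (f (w, z)) :=
    ofReal_integral_eq_lintegral_ofReal (hint w) (.of_forall fun z => hnonneg (w, z))
  have meas (w : Fin m → ℝ) : Measurable fun z => ENNReal.ofReal (f (w, z)) := by fun_prop
  rw [← ENNReal.ofReal_le_ofReal_iff (integral_nonneg _),
    ENNReal.ofReal_mul (Real.rpow_nonneg (integral_nonneg x) t),
    ← ENNReal.ofReal_rpow_of_nonneg (integral_nonneg x) ht.1,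
    ← ENNReal.ofReal_rpow_of_nonneg (integral_nonneg y) hs.le,
    ofReal_integral, ofReal_integral, ofReal_integral]
  refine ENNReal.prekopa_leindler (meas x) (meas y) (meas _) ht0 hs (by ring) fun z w => ?_
  rw [ENNReal.ofReal_rpow_of_nonneg (hnonneg _) ht.1,
    ENNReal.ofReal_rpow_of_nonneg (hnonneg _) hs.le,
    ← ENNReal.ofReal_mul (Real.rpow_nonneg (hnonneg _) t)]
  exact ENNReal.ofReal_le_ofReal (hlc (x, z) (y, w) t ht)
end
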